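/- (Additive Variance Property, linearized fixed point) Let n ≥ 1, σ > 0, κ > 0, and let μ be the product measure on ℝ^n whose coordinates are independent real Gaussians N(0, σ²). Define L(A) = E_μ[‖(A + σ⁻²·I)x‖²] + κ·Tr(Aᵀ A) for n×n real matrices A. Then L has a unique global minimizer over all n×n real matrices, namely A* = −(σ² + κ)⁻¹·I; that is, L(A) ≥ L(A*) for all A, with equality if and only if A = A*. The minimizer A* is exactly the differential of the score map of the isotropic Gaussian N(0, (σ² + κ)·I): the regularized score model learns an off-manifold isotropic Gaussian with variance σ² + κ in place of the true variance σ². -/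

import Mathlib

/-!
Independence and centering give `E[xᵢ xⱼ] = σ² δᵢⱼ`, so `E‖Bx‖² = σ² ∑ᵢⱼ Bᵢⱼ²`
(`integral_norm_sq_mulVec`; each row is the variance of a sum of independent variables).
The criterion is therefore a sum over the entries of `σ² (a + σ⁻² δ)² + κ a²`, and completing
the square entrywise gives
`L(A) = L(A*) + (σ² + κ) ∑ᵢⱼ (Aᵢⱼ - A*ᵢⱼ)²`,
from which minimality and uniqueness are immediate. The score map is linear, so it is its own
differential.
-/

open MeasureTheory ProbabilityTheory Matrix

lemma integrable_const_mul_eval {n : ℕ} (v : NNReal) (c : ℝ) (j : Fin n) :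
    Integrable (fun x : Fin n → ℝ => c * x j)
      (Measure.pi fun _ : Fin n => gaussianReal 0 v) := by
  have h : Integrable (fun y : ℝ => c * y) (gaussianReal 0 v) :=
    ((memLp_id_gaussianReal (μ := 0) (v := v) 1).integrable (by simp)).const_mul c
  exact (measurePreserving_eval (fun _ : Fin n => gaussianReal 0 v) j).integrable_comp_of_integrable h

lemma integral_const_mul_eval {n : ℕ} (v : NNReal) (c : ℝ) (j : Fin n) :
    ∫ x : Fin n → ℝ, c * x j ∂(Measure.pi fun _ : Fin n => gaussianReal 0 v) = 0 := by
  rw [integral_const_mul,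
    integral_comp_eval (μ := fun _ : Fin n => gaussianReal 0 v) (i := j) (f := fun y : ℝ => y)
      (by fun_prop), integral_id_gaussianReal, mul_zero]

/-- A linear form with coefficients `b` is centered, so its second moment is its variance, which
is additive over the independent coordinates. -/
lemma integral_linear_form_sq {n : ℕ} (v : NNReal) (b : Fin n → ℝ) :
    ∫ x : Fin n → ℝ, (∑ j, b j * x j) ^ 2 ∂(Measure.pi fun _ : Fin n => gaussianReal 0 v)
      = v * ∑ j, b j ^ 2 := by
  have h0 : ∫ x : Fin n → ℝ, ∑ j, b j * x j
      ∂(Measure.pi fun _ : Fin n => gaussianReal 0 v) = 0 := by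
    rw [integral_finsetSum _ fun j _ => integrable_const_mul_eval v (b j) j]
    simp only [integral_const_mul_eval, Finset.sum_const_zero]
  have hm : AEMeasurable (fun x : Fin n → ℝ => ∑ j, b j * x j)
      (Measure.pi fun _ : Fin n => gaussianReal 0 v) :=
    (integrable_finsetSum _ fun j _ => integrable_const_mul_eval v (b j) j).aemeasurable
  have hv := variance_sum_pi (μ := fun _ : Fin n => gaussianReal 0 v)
    (X := fun j (y : ℝ) => b j * y)
    fun j => (memLp_id_gaussianReal (μ := 0) (v := v) 2).const_mul (b j)
  have he : (∑ j, fun x : Fin n → ℝ => b j * x j) = fun x => ∑ j, b j * x j := by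
    ext x; simp
  rw [he] at hv
  rw [← variance_of_integral_eq_zero hm h0, hv, Finset.mul_sum]
  refine Finset.sum_congr rfl fun j _ => ?_
  rw [variance_const_mul, ← Function.id_def, variance_id_gaussianReal, mul_comm]

lemma integrable_linear_form_sq {n : ℕ} (v : NNReal) (b : Fin n → ℝ) :
    Integrable (fun x : Fin n → ℝ => (∑ j, b j * x j) ^ 2)
      (Measure.pi fun _ : Fin n => gaussianReal 0 v) := by
  refine MemLp.integrable_sq (memLp_finsetSum _ fun j _ => ?_)
  exact ((memLp_id_gaussianReal (μ := 0) (v := v) 2).const_mul (b j)).comp_measurePreserving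
    (measurePreserving_eval (fun _ : Fin n => gaussianReal 0 v) j)

/-- For a centered Gaussian vector with covariance `v • 1`, the mean square of `B x` is `v` times
the squared Frobenius norm of `B`. -/
lemma integral_norm_sq_mulVec {n : ℕ} (v : NNReal) (B : Matrix (Fin n) (Fin n) ℝ) :
    ∫ x : Fin n → ℝ, ‖(EuclideanSpace.equiv (Fin n) ℝ).symm (B *ᵥ x)‖ ^ 2
        ∂(Measure.pi fun _ : Fin n => gaussianReal 0 v)
      = v * ∑ i, ∑ j, B i j ^ 2 := by
  have h (x : Fin n → ℝ) : ‖(EuclideanSpace.equiv (Fin n) ℝ).symm (B *ᵥ x)‖ ^ 2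
      = ∑ i, (∑ j, B i j * x j) ^ 2 := by
    rw [EuclideanSpace.real_norm_sq_eq]
    rfl
  simp_rw [h]
  rw [integral_finsetSum _ fun i _ => integrable_linear_form_sq v (B i)]
  simp_rw [integral_linear_form_sq, Finset.mul_sum]

/-- **(Additive Variance Property, linearized fixed point.)**
For `n ≥ 1`, `σ > 0`, `κ > 0`, `μ = ⨂_{i<n} N(0, σ²)` and the regularized linearized
score-matching criterion `L(A) = E_μ[‖(A + σ⁻²·I)x‖²] + κ·Tr(AᵀA)`, the matrix
`A* = −(σ² + κ)⁻¹·I` is the unique global minimizer of `L`: `L(A*) ≤ L(A)` for every `A`,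
with equality iff `A = A*`.  Moreover `A*` is exactly the (constant) differential of the
score map `x ↦ −(σ² + κ)⁻¹·x` of the isotropic Gaussian `N(0, (σ² + κ)·I)`: the regularized
score model learns off-manifold variance `σ² + κ` in place of the true variance `σ²`. -/
theorem additive_variance_property_linearized_fixed_point
    (n : ℕ) (hn : 1 ≤ n) (σ κ : ℝ) (hσ : 0 < σ) (hκ : 0 < κ)
    (L : Matrix (Fin n) (Fin n) ℝ → ℝ)
    (hL : ∀ A : Matrix (Fin n) (Fin n) ℝ,
      L A = (∫ x : Fin n → ℝ,
          ‖(EuclideanSpace.equiv (Fin n) ℝ).symm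
              ((A + (σ ^ 2)⁻¹ • (1 : Matrix (Fin n) (Fin n) ℝ)) *ᵥ x)‖ ^ 2
          ∂(Measure.pi fun _ : Fin n => gaussianReal 0 ⟨σ ^ 2, sq_nonneg σ⟩))
        + κ * (Aᵀ * A).trace)
    (Astar : Matrix (Fin n) (Fin n) ℝ)
    (hAstar : Astar = -(σ ^ 2 + κ)⁻¹ • (1 : Matrix (Fin n) (Fin n) ℝ)) :
    (∀ A : Matrix (Fin n) (Fin n) ℝ, L Astar ≤ L A) ∧
    (∀ A : Matrix (Fin n) (Fin n) ℝ, L A = L Astar ↔ A = Astar) ∧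
    (∀ x : EuclideanSpace ℝ (Fin n),
      fderiv ℝ (fun y : EuclideanSpace ℝ (Fin n) => (-(σ ^ 2 + κ)⁻¹ : ℝ) • y) x
        = Matrix.toEuclideanCLM (𝕜 := ℝ) Astar) := by
  have hs : 0 < σ ^ 2 + κ := by positivity
  -- Completing the square entrywise.
  have key (A : Matrix (Fin n) (Fin n) ℝ) :
      L A = L Astar + (σ ^ 2 + κ) * ∑ i, ∑ j, (A i j - Astar i j) ^ 2 := by
    have htr (M : Matrix (Fin n) (Fin n) ℝ) : (Mᵀ * M).trace = ∑ i, ∑ j, M i j ^ 2 := by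
      simp only [trace, diag_apply, mul_apply, transpose_apply]
      rw [Finset.sum_comm]
      simp only [sq]
    have hL' (M : Matrix (Fin n) (Fin n) ℝ) :
        L M = σ ^ 2 * ∑ i, ∑ j, (M + (σ ^ 2)⁻¹ • (1 : Matrix (Fin n) (Fin n) ℝ)) i j ^ 2
          + κ * (Mᵀ * M).trace :=
      (hL M).trans (congrArg (· + κ * (Mᵀ * M).trace)
        (integral_norm_sq_mulVec ⟨σ ^ 2, sq_nonneg σ⟩ _))
    rw [hL', hL', htr, htr]
    simp only [Finset.mul_sum, ← Finset.sum_add_distrib]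
    refine Finset.sum_congr rfl fun i _ => Finset.sum_congr rfl fun j _ => ?_
    subst hAstar
    by_cases hij : i = j
    · subst hij
      simp
      field_simp
      ring
    · simp [hij]
      ring
  have hnn (A : Matrix (Fin n) (Fin n) ℝ) : 0 ≤ ∑ i, ∑ j, (A i j - Astar i j) ^ 2 := by
    positivity
  refine ⟨fun A => ?_, fun A => ⟨fun h => ?_, fun h => by rw [h]⟩, fun x => ?_⟩
  · rw [key A]
    have := mul_nonneg hs.le (hnn A)
    linarith
  · rw [key A, add_eq_left, mul_eq_zero, or_iff_right hs.ne',
      Finset.sum_eq_zero_iff_of_nonneg fun i _ => by positivity] at h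
    ext i j
    have hi := h i (Finset.mem_univ i)
    rw [Finset.sum_eq_zero_iff_of_nonneg fun j _ => by positivity] at hi
    exact sub_eq_zero.mp (pow_eq_zero_iff two_ne_zero |>.mp (hi j (Finset.mem_univ j)))
  · rw [hAstar, map_smul, map_one]
    exact ((hasFDerivAt_id x).const_smul (-(σ ^ 2 + κ)⁻¹)).fderiv
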